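/- Let k ≥ 2, ε > 0, u ≥ 1, i ∈ {1,…,k}, and let Q ∈ D_{ε,E} have output alphabet {1,…,L}. For every δ > 0 there exists D_0 > 0 such that for every constant D ≥ D_0 in the definition of the prior set P_n, liminf_{n→∞} n^{u/2} r_{i,Bayes}^{ℓ_u^u}(Q) ≥ C_u ((k^2/(k−1)^2) Σ_{j=1}^L (q_{ji} − q_j)^2 / q_j)^{−u/2} − δ. -/

import Mathlib

/-!
The bound is a local asymptotic minimax argument along the least favourable direction. Let
`d = k / (k - 1) * (e_i - p_U)`, so that `d i = 1` and `∑ d = 0`. Moving `p` to `p + (h / √n) d`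
moves `p i` by `h / √n` and the output law `m_j = ∑ p_v q_jv` by `h / √n` times
`v_j = k / (k - 1) * (q_ji - q_j)`; the Fisher information of this one-parameter family at `p_U` is
`F = ∑ v_j ^ 2 / q_j`, the quantity in the statement.

*One dimension.* For a base law `m` near `(q_j)` and `h` uniform on `[-H, H]`, the log-likelihood
ratio of a sample is bounded below by `h S - J h ^ 2 / 2`, where `S` is the normalized score and
`J > F` is arbitrarily close to `F`, except on an event of vanishing probability (`exp_le_one_add`,
`lln_weights`). So the posterior dominates a Gaussian of precision `J` centred at `S / J`, against
which no estimator beats the centre (`gauss_loss_le`). Averaging the normalizing factor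
`exp (S ^ 2 / (2 J))` with the central limit theorem (`clt_weights`), then taking `J → F` and
`H → ∞`, gives `C_u F ^ (-u / 2)` (`exists_oneDim`).

*Reduction to one dimension.* The `(k - 1)`-dimensional Hausdorff measure is translation invariant,
and `P_n` with radius parameter `D` contains all translates by `(h / √n) d`, `|h| ≤ H`, of the prior
set with parameter `D' = D - H ‖d‖`. Averaging over `h` bounds the Bayes risk from below by the
volume ratio `(D' / D) ^ (k - 1)` times the smallest one-dimensional Bayes risk with base point in
the smaller set (`lintegral_Pball_ge`, `bayesRisk_ge`). The base points converge to `p_U` uniformly,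
so the one-dimensional bound applies uniformly (`eventually_forall_Pball`), and the volume ratio
tends to one as `D → ∞`.
-/


open MeasureTheory ProbabilityTheory Filter Real
open scoped ENNReal NNReal

noncomputable section

/-- The probability simplex Δ_k ⊆ ℝ^k. -/
def simplex (k : ℕ) : Set (Fin k → ℝ) :=
  {p | (∀ i, 0 ≤ p i) ∧ ∑ i, p i = 1}

/-- ε-local differential privacy for a Markov kernel from `Fin k` to `Y`. -/
def IsPrivate {Y : Type} [MeasurableSpace Y] {k : ℕ} (ε : ℝ) (Q : Kernel (Fin k) Y) : Prop :=
  IsMarkovKernel Q ∧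
    ∀ S : Set Y, MeasurableSet S → ∀ x x' : Fin k,
      Q x S ≤ ENNReal.ofReal (Real.exp ε) * Q x' S

/-- The marginal distribution m = pQ of a privatized sample. -/
def marginal {Y : Type} [MeasurableSpace Y] {k : ℕ} (Q : Kernel (Fin k) Y)
    (p : Fin k → ℝ) : Measure Y :=
  ∑ i, ENNReal.ofReal (p i) • Q i

/-- Worst-case ℓ_u^u risk of the mechanism `Q` with estimator `est` from `n` samples. -/
def risk {Y : Type} [MeasurableSpace Y] (k n : ℕ) (u : ℝ) (Q : Kernel (Fin k) Y)
    (est : (Fin n → Y) → Fin k → ℝ) : ℝ≥0∞ :=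
  ⨆ p ∈ simplex k,
    ∫⁻ y, ENNReal.ofReal (∑ i, |est y i - p i| ^ u)
      ∂(Measure.pi fun _ : Fin n => marginal Q p)

/-- Minimax ℓ_u^u risk of the mechanism `Q` from `n` samples. -/
def minimaxRisk {Y : Type} [MeasurableSpace Y] (k n : ℕ) (u : ℝ) (Q : Kernel (Fin k) Y) : ℝ≥0∞ :=
  ⨅ (est : (Fin n → Y) → Fin k → ℝ) (_ : Measurable est), risk k n u Q est

/-- Output alphabet Y_{k,d} : subsets of {1,…,k} of size d. -/
def Out (k d : ℕ) : Type := {S : Finset (Fin k) // S.card = d}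

instance (k d : ℕ) : Fintype (Out k d) := Subtype.fintype _
instance (k d : ℕ) : MeasurableSpace (Out k d) := ⊤
instance (k d : ℕ) : MeasurableSingletonClass (Out k d) := ⟨fun _ => trivial⟩
instance (k d : ℕ) : DecidableEq (Out k d) := Subtype.instDecidableEq

/-- Q_{k,ε,d}(y|i). -/
def schemeP (k : ℕ) (ε : ℝ) (d : ℕ) (i : Fin k) (y : Out k d) : ℝ :=
  (if i ∈ y.1 then Real.exp ε else 1) /
    ((k-1).choose (d-1) * Real.exp ε + (k-1).choose d)

/-- The scheme Q_{k,ε,d} as a Markov kernel. -/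
def schemeKernel (k : ℕ) (ε : ℝ) (d : ℕ) : Kernel (Fin k) (Out k d) :=
  Kernel.ofFunOfCountable fun i =>
    ∑ y : Out k d, ENNReal.ofReal (schemeP k ε d i y) • Measure.dirac y

/-- Constant A of the empirical estimator. -/
def Aconst (k d : ℕ) (ε : ℝ) : ℝ :=
  (((k:ℝ)-1) * Real.exp ε + ((k:ℝ)-1)*((k:ℝ)-d)/d) / (((k:ℝ)-d)*(Real.exp ε - 1))

/-- Constant B of the empirical estimator. -/
def Bconst (k d : ℕ) (ε : ℝ) : ℝ :=
  (((d:ℝ)-1) * Real.exp ε + ((k:ℝ)-d)) / (((k:ℝ)-d)*(Real.exp ε - 1))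

/-- t_i(y^n): the number of privatized samples whose i-th coordinate is 1. -/
def tcount {k d n : ℕ} (i : Fin k) (y : Fin n → Out k d) : ℕ :=
  (Finset.univ.filter fun j => i ∈ (y j).1).card

/-- The empirical estimator p̂ under Q_{k,ε,d}. -/
def empEst (k d n : ℕ) (ε : ℝ) (y : Fin n → Out k d) (i : Fin k) : ℝ :=
  Aconst k d ε * ((tcount i y : ℝ) / n) - Bconst k d ε

/-- Marginal probability (pQ_{k,ε,d})(y). -/
def margP (k : ℕ) (ε : ℝ) (d : ℕ) (p : Fin k → ℝ) (y : Out k d) : ℝ :=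
  ∑ i, p i * schemeP k ε d i y

/-- Membership in D_{ε,E}: a finite-output ε-LDP scheme, given by the matrix
`q j v = Q(j|v)`, whose conditional probability ratios take only values 1 and e^ε. -/
def memDEE (k L : ℕ) (ε : ℝ) (q : Fin L → Fin k → ℝ) : Prop :=
  (∀ j v, 0 ≤ q j v) ∧ (∀ v, ∑ j, q j v = 1) ∧
  (∀ j v v', q j v ≤ Real.exp ε * q j v') ∧
  (∀ j v, q j v / (⨅ v', q j v') ∈ ({1, Real.exp ε} : Set ℝ))

/-- q_j = (1/k) Σ_v q_{jv}. -/
def qrow {k L : ℕ} (q : Fin L → Fin k → ℝ) (j : Fin L) : ℝ :=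
  (1/(k:ℝ)) * ∑ v, q j v

/-- A finite-output scheme (matrix) as a Markov kernel. -/
def matKernel (k L : ℕ) (q : Fin L → Fin k → ℝ) : Kernel (Fin k) (Fin L) :=
  Kernel.ofFunOfCountable fun v =>
    ∑ j, ENNReal.ofReal (q j v) • Measure.dirac j

/-- C_u = E|X|^u for X standard normal. -/
def Cmom (u : ℝ) : ℝ := ∫ x, |x| ^ u ∂(gaussianReal 0 1)

/-- g(s) = (s e^ε + k − s)² / (s(k−s)). -/
def gfun (ε k s : ℝ) : ℝ := (s * Real.exp ε + k - s)^2 / (s * (k - s))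

/-- d* is a minimizer of (d e^ε + k − d)²/(d(k−d)) over d ∈ {1,…,k−1}. -/
def IsOptDstar (k : ℕ) (ε : ℝ) (dstar : ℕ) : Prop :=
  dstar ∈ Finset.Icc 1 (k-1) ∧
    ∀ d ∈ Finset.Icc 1 (k-1), gfun ε k dstar ≤ gfun ε k d

/-- M(k,ε). -/
def Mconst (k : ℕ) (ε : ℝ) (dstar : ℕ) : ℝ :=
  (((k:ℝ)-1)^2 / ((k:ℝ)^2 * (Real.exp ε - 1)^2)) * gfun ε k dstar

/-- The prior set P_n = {p ∈ Δ_k : ‖p − p_U‖₂ ≤ D/√n}. -/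
def Pball (k : ℕ) (D : ℝ) (n : ℕ) : Set (Fin k → ℝ) :=
  {p | p ∈ simplex k ∧ Real.sqrt (∑ i, (p i - 1/(k:ℝ))^2) ≤ D / Real.sqrt n}

/-- The uniform distribution on P_n: normalized (k−1)-dimensional Hausdorff measure. -/
def unifP (k : ℕ) (D : ℝ) (n : ℕ) : Measure (Fin k → ℝ) :=
  ((μH[((k:ℝ)-1)]) (Pball k D n))⁻¹ • (μH[((k:ℝ)-1)]).restrict (Pball k D n)

/-- Component-wise optimal Bayes ℓ_u^u risk for the finite-output scheme `q`,
with the uniform prior on P_n. -/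
def bayesRisk (k L : ℕ) (u : ℝ) (q : Fin L → Fin k → ℝ) (D : ℝ) (n : ℕ) (i : Fin k) : ℝ≥0∞ :=
  ⨅ est : (Fin n → Fin L) → ℝ,
    ∫⁻ p, (∑ y : Fin n → Fin L,
        (∏ j, ENNReal.ofReal (∑ v, p v * q (y j) v)) *
          ENNReal.ofReal (|est y - p i| ^ u))
      ∂(unifP k D n)

end

/-! ### Limit theorems for triangular arrays of scores -/

open Topology in
/-- Second-order behaviour of `exp` along `z n ~ w / √n`; this is the Taylor expansion needed for
the characteristic function of a triangular array. -/
lemma tendsto_mul_exp_sub (z : ℕ → ℂ) (w : ℂ)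
    (h : Tendsto (fun n : ℕ => (√(n:ℝ) : ℂ) * z n) atTop (𝓝 w)) :
    Tendsto (fun n : ℕ => (n : ℂ) * (Complex.exp (z n) - 1 - z n)) atTop (𝓝 (w ^ 2 / 2)) := by
  have hs : Tendsto (fun n : ℕ => √(n:ℝ)) atTop atTop :=
    tendsto_sqrt_atTop.comp tendsto_natCast_atTop_atTop
  have hinv : Tendsto (fun n : ℕ => (√(n:ℝ))⁻¹) atTop (𝓝 0) := tendsto_inv_atTop_zero.comp hs
  have hz : Tendsto z atTop (𝓝 0) := by
    have h1 : Tendsto (fun n : ℕ => (((√(n:ℝ))⁻¹ : ℝ) : ℂ) * ((√(n:ℝ) : ℂ) * z n)) atTop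
        (𝓝 (((0:ℝ) : ℂ) * w)) := ((Complex.continuous_ofReal.tendsto 0).comp hinv).mul h
    simp only [Complex.ofReal_zero, zero_mul] at h1
    refine h1.congr' ?_
    filter_upwards [eventually_gt_atTop 0] with n hn
    have : (√(n:ℝ) : ℂ) ≠ 0 := by
      exact_mod_cast (Real.sqrt_pos.2 (by exact_mod_cast hn)).ne'
    push_cast
    field_simp
  have hmain : Tendsto (fun n : ℕ => ((√(n:ℝ) : ℂ) * z n) ^ 2 / 2) atTop (𝓝 (w ^ 2 / 2)) :=
    (h.pow 2).div_const 2
  have herr : Tendsto (fun n : ℕ => (n : ℂ) * (Complex.exp (z n) - 1 - z n - z n ^ 2 / 2)) atTop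
      (𝓝 0) := by
    have hb : Tendsto (fun n : ℕ => ‖(√(n:ℝ) : ℂ) * z n‖ ^ 3 * (√(n:ℝ))⁻¹) atTop (𝓝 0) := by
      simpa using (h.norm.pow 3).mul hinv
    refine squeeze_zero_norm' ?_ hb
    have hz1 : ∀ᶠ n in atTop, ‖z n‖ ≤ 1 := by
      have := hz.norm
      rw [norm_zero] at this
      exact this.eventually (eventually_le_nhds one_pos)
    filter_upwards [eventually_gt_atTop 0, hz1] with n hn hzn
    have hpos : 0 < √(n:ℝ) := Real.sqrt_pos.2 (by exact_mod_cast hn)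
    have hsq : √(n:ℝ) ^ 2 = n := Real.sq_sqrt (by positivity)
    have hexp := Complex.exp_bound hzn (n := 3) (by norm_num)
    simp [Finset.sum_range_succ, Nat.factorial] at hexp
    have h2 : ‖Complex.exp (z n) - 1 - z n - z n ^ 2 / 2‖ ≤ ‖z n‖ ^ 3 := by
      have e : Complex.exp (z n) - 1 - z n - z n ^ 2 / 2 =
        Complex.exp (z n) - (1 + z n + z n ^ 2 / 2) := by ring
      rw [e]
      refine hexp.trans ?_
      have : 0 ≤ ‖z n‖ ^ 3 := by positivity
      nlinarith
    rw [norm_mul, norm_mul, Complex.norm_natCast, Complex.norm_real, Real.norm_of_nonneg hpos.le]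
    calc (n:ℝ) * _ ≤ n * ‖z n‖ ^ 3 := by gcongr
      _ = _ := by
        have aux : ∀ r N x : ℝ, 0 < r → r ^ 2 = N → N * x ^ 3 = (r * x) ^ 3 * r⁻¹ := by
          intro r N x hr hN
          rw [← hN]; field_simp
        exact aux _ _ _ hpos hsq
  have := hmain.add herr
  rw [add_zero] at this
  refine this.congr fun n => ?_
  have hsq : (√(n:ℝ) : ℂ) ^ 2 = n := by
    exact_mod_cast congrArg Complex.ofReal (Real.sq_sqrt (Nat.cast_nonneg n : (0:ℝ) ≤ n))
  rw [mul_pow, hsq]; ring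

open Topology in
/-- Central limit theorem for the scores of a triangular array: if `Y_1, …, Y_n` are independent
with law `m n` on `Fin L` and `m n → μ`, then the normalized score `∑ v (Y_l) / m n (Y_l) / √n`
converges in law to the centred Gaussian whose variance is the Fisher information
`∑ v_j ^ 2 / μ_j`. Expectations are written as finite sums over all samples `y`. The proof is by
Lévy's continuity theorem. -/
lemma clt_weights {L : ℕ} (m : ℕ → Fin L → ℝ) (μ v : Fin L → ℝ)
    (hm0 : ∀ n j, 0 < m n j) (hm1 : ∀ n, ∑ j, m n j = 1)
    (hμ0 : ∀ j, 0 < μ j) (hv : ∑ j, v j = 0)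
    (hm : ∀ j, Tendsto (fun n => m n j) atTop (𝓝 (μ j)))
    (I : ℝ≥0) (hI : (I : ℝ) = ∑ j, v j ^ 2 / μ j) (g : BoundedContinuousFunction ℝ ℝ) :
    Tendsto (fun n : ℕ => ∑ y : Fin n → Fin L, (∏ l, m n (y l)) *
      g (∑ l, v (y l) / m n (y l) / √n)) atTop (𝓝 (∫ x, g x ∂(gaussianReal 0 I))) := by
  have hw0 : ∀ n (y : Fin n → Fin L), 0 ≤ ∏ l, m n (y l) := fun n y =>
    Finset.prod_nonneg fun l _ => (hm0 n _).le
  have hw1 : ∀ n, ∑ y : Fin n → Fin L, ∏ l, m n (y l) = 1 := fun n => by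
    rw [← Fintype.sum_pow, hm1, one_pow]
  let ν : ℕ → Measure ℝ := fun n => ∑ y : Fin n → Fin L,
    ENNReal.ofReal (∏ l, m n (y l)) • Measure.dirac (∑ l, v (y l) / m n (y l) / √n)
  have hν : ∀ n, IsProbabilityMeasure (ν n) := fun n => ⟨by
    simp only [ν, Measure.coe_finsetSum, Finset.sum_apply, Measure.smul_apply, measure_univ,
      smul_eq_mul, mul_one]
    rw [← ENNReal.ofReal_sum_of_nonneg fun y _ => hw0 n y, hw1, ENNReal.ofReal_one]⟩
  have hint : ∀ {E : Type} [NormedAddCommGroup E] [NormedSpace ℝ E] [CompleteSpace E] (f : ℝ → E) n,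
      ∫ x, f x ∂(ν n) = ∑ y : Fin n → Fin L, (∏ l, m n (y l)) •
        f (∑ l, v (y l) / m n (y l) / √n) := by
    intro E _ _ _ f n
    simp only [ν]
    rw [integral_finsetSum_measure]
    · refine Finset.sum_congr rfl fun y _ => ?_
      rw [integral_smul_measure, integral_dirac, ENNReal.toReal_ofReal (hw0 n y)]
    · intro y _
      exact (integrable_dirac (by simp)).smul_measure ENNReal.ofReal_ne_top
  let P : ℕ → ProbabilityMeasure ℝ := fun n => ⟨ν n, hν n⟩
  let P₀ : ProbabilityMeasure ℝ := ⟨gaussianReal 0 I, inferInstance⟩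
  have key : Tendsto P atTop (𝓝 P₀) := by
    refine ProbabilityMeasure.tendsto_of_tendsto_charFun fun t => ?_
    change Tendsto (fun n => charFun (ν n) t) atTop (𝓝 (charFun (gaussianReal 0 I) t))
    rw [charFun_gaussianReal]
    have hc : ∀ n, charFun (ν n) t =
        (1 + (∑ j, (m n j : ℂ) * Complex.exp (t * (v j / m n j / √(n:ℝ) : ℝ) * Complex.I) - 1)) ^ n := by
      intro n
      rw [charFun_apply_real, hint, add_sub_cancel, Fintype.sum_pow]
      refine Finset.sum_congr rfl fun y _ => ?_
      rw [Finset.prod_mul_distrib, ← Complex.exp_sum, Complex.real_smul]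
      push_cast
      rw [Finset.mul_sum, Finset.sum_mul]
    simp_rw [hc]
    refine Complex.tendsto_one_add_pow_exp_of_tendsto ?_
    have h1 : ∀ j, Tendsto (fun n : ℕ => (m n j : ℂ) * ((n:ℂ) *
        (Complex.exp (t * (v j / m n j / √(n:ℝ) : ℝ) * Complex.I) - 1
          - t * (v j / m n j / √(n:ℝ) : ℝ) * Complex.I))) atTop
        (𝓝 ((μ j : ℂ) * ((t * (v j / μ j : ℝ) * Complex.I) ^ 2 / 2))) := by
      intro j
      refine ((Complex.continuous_ofReal.tendsto _).comp (hm j)).mul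
        (tendsto_mul_exp_sub _ _ ?_)
      have h2 : Tendsto (fun n => ((t * (v j / m n j) : ℝ) : ℂ) * Complex.I) atTop
          (𝓝 (((t * (v j / μ j) : ℝ) : ℂ) * Complex.I)) := by
        refine Tendsto.mul_const _ ((Complex.continuous_ofReal.tendsto _).comp ?_)
        exact Tendsto.const_mul _ (Tendsto.div tendsto_const_nhds (hm j) (hμ0 j).ne')
      push_cast at h2 ⊢
      refine h2.congr' ?_
      filter_upwards [eventually_gt_atTop 0] with n hn
      have : (√(n:ℝ) : ℂ) ≠ 0 := by
        exact_mod_cast (Real.sqrt_pos.2 (by exact_mod_cast hn)).ne'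
      field_simp
    have h3 := tendsto_finsetSum Finset.univ fun j _ => h1 j
    have e1 : (t * ((0:ℝ):ℂ) * Complex.I - (I:ℝ) * t ^ 2 / 2 : ℂ) =
        ∑ j, (μ j : ℂ) * ((t * (v j / μ j : ℝ) * Complex.I) ^ 2 / 2) := by
      rw [hI]; push_cast
      rw [Finset.sum_mul, Finset.sum_div, mul_zero, zero_mul, zero_sub, ← Finset.sum_neg_distrib]
      refine Finset.sum_congr rfl fun j _ => ?_
      have : (μ j : ℂ) ≠ 0 := by exact_mod_cast (hμ0 j).ne'
      rw [mul_pow, Complex.I_sq]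
      field_simp
    simp only [Complex.ofReal_zero] at e1
    rw [show (((I:ℝ≥0):ℝ):ℂ) = ((I:ℝ):ℂ) from rfl, Complex.ofReal_zero, e1]
    refine h3.congr fun n => ?_
    have hz : ∑ j, (m n j : ℂ) * (t * (v j / m n j / √(n:ℝ) : ℝ) * Complex.I) = 0 := by
      have : ∀ j, (m n j : ℂ) * (t * (v j / m n j / √(n:ℝ) : ℝ) * Complex.I) =
          (v j : ℂ) * (t / √(n:ℝ) * Complex.I) := by
        intro j
        have : (m n j : ℂ) ≠ 0 := by exact_mod_cast (hm0 n j).ne'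
        push_cast; field_simp
      simp_rw [this]
      rw [← Finset.sum_mul, ← Complex.ofReal_sum, hv]; simp
    have hone : ∑ j, (m n j : ℂ) = 1 := by exact_mod_cast congrArg Complex.ofReal (hm1 n)
    calc _ = (n:ℂ) * (∑ j, (m n j : ℂ) * Complex.exp (t * (v j / m n j / √(n:ℝ) : ℝ) * Complex.I)
          - ∑ j, (m n j : ℂ) - ∑ j, (m n j : ℂ) * (t * (v j / m n j / √(n:ℝ) : ℝ) * Complex.I)) := by
            rw [← Finset.sum_sub_distrib, ← Finset.sum_sub_distrib, Finset.mul_sum]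
            exact Finset.sum_congr rfl fun j _ => by ring
      _ = _ := by rw [hz, hone, sub_zero]
  have := (ProbabilityMeasure.tendsto_iff_forall_integral_tendsto.1 key) g
  refine this.congr fun n => ?_
  exact hint g n

open Topology in
/-- A random variable with negative mean has an exponential moment below one: the moment generating
function equals one and has negative slope at zero. -/
lemma exists_exp_moment_lt_one {L : ℕ} (μ f : Fin L → ℝ) (hμ1 : ∑ j, μ j = 1)
    (hf : ∑ j, μ j * f j < 0) : ∃ t > 0, ∑ j, μ j * Real.exp (t * f j) < 1 := by
  have hd : HasDerivAt (fun t : ℝ => ∑ j, μ j * Real.exp (t * f j)) (∑ j, μ j * f j) 0 := by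
    have : ∀ j ∈ Finset.univ,
        HasDerivAt (fun t : ℝ => μ j * Real.exp (t * f j)) (μ j * f j) 0 := by
      intro j _
      have := (((hasDerivAt_id (0:ℝ)).mul_const (f j)).exp).const_mul (μ j)
      simpa using this
    exact HasDerivAt.fun_sum this
  have hslope := (hasDerivAt_iff_tendsto_slope.1 hd).mono_left
    (nhdsWithin_mono (0:ℝ) (s := Set.Ioi 0) (fun x hx => ne_of_gt hx))
  obtain ⟨t, ht, ht0⟩ := ((hslope.eventually (gt_mem_nhds hf)).and self_mem_nhdsWithin).exists
  refine ⟨t, ht0, ?_⟩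
  rw [slope_def_field] at ht
  simp only [zero_mul, Real.exp_zero, mul_one, hμ1, sub_zero] at ht
  have := (div_neg_iff.1 ht)
  rcases this with h | h
  · exact absurd h.2 (not_lt.2 (le_of_lt ht0))
  · linarith [h.1]

open Topology in
/-- Upper half of the weak law of large numbers for the squared scores of the triangular array, by
Chernoff's bound: their average exceeds any `K > ∑ v_j ^ 2 / μ_j` with vanishing probability. -/
lemma lln_weights {L : ℕ} (m : ℕ → Fin L → ℝ) (μ v : Fin L → ℝ)
    (hm0 : ∀ n j, 0 < m n j)
    (hμ0 : ∀ j, 0 < μ j) (hμ1 : ∑ j, μ j = 1)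
    (hm : ∀ j, Tendsto (fun n => m n j) atTop (𝓝 (μ j)))
    (K : ℝ) (hK : ∑ j, v j ^ 2 / μ j < K) :
    Tendsto (fun n : ℕ => ∑ y : Fin n → Fin L, (∏ l, m n (y l)) *
      (if n * K < ∑ l, (v (y l) / m n (y l)) ^ 2 then 1 else 0)) atTop (𝓝 0) := by
  obtain ⟨t, ht0, ht⟩ := exists_exp_moment_lt_one μ (fun j => (v j / μ j) ^ 2 - K) hμ1 (by
    have : ∑ j, μ j * ((v j / μ j) ^ 2 - K) = ∑ j, v j ^ 2 / μ j - K := by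
      simp_rw [mul_sub]
      rw [Finset.sum_sub_distrib, ← Finset.sum_mul, hμ1, one_mul]
      congr 1
      refine Finset.sum_congr rfl fun j _ => ?_
      have := (hμ0 j).ne'
      field_simp
    rw [this]; linarith)
  have hb : Tendsto (fun n => ∑ j, m n j * Real.exp (t * ((v j / m n j) ^ 2 - K))) atTop
      (𝓝 (∑ j, μ j * Real.exp (t * ((v j / μ j) ^ 2 - K)))) := by
    refine tendsto_finsetSum _ fun j _ => (hm j).mul ((Real.continuous_exp.tendsto _).comp ?_)
    exact (((tendsto_const_nhds.div (hm j) (hμ0 j).ne').pow 2).sub_const K).const_mul t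
  obtain ⟨r, hr1, hr2⟩ := exists_between ht
  have hr0 : 0 < r := lt_of_le_of_lt (Finset.sum_nonneg fun j _ =>
    mul_nonneg (hμ0 j).le (Real.exp_pos _).le) hr1
  refine squeeze_zero' (.of_forall fun n => Finset.sum_nonneg fun y _ => mul_nonneg
    (Finset.prod_nonneg fun l _ => (hm0 n _).le) (by split_ifs <;> norm_num)) ?_
    (tendsto_pow_atTop_nhds_zero_of_lt_one hr0.le hr2)
  filter_upwards [hb.eventually (gt_mem_nhds hr1)] with n hn
  refine le_trans ?_ (pow_le_pow_left₀ (Finset.sum_nonneg fun j _ =>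
    mul_nonneg (hm0 n j).le (Real.exp_pos _).le) hn.le n)
  rw [Fintype.sum_pow]
  refine Finset.sum_le_sum fun y _ => ?_
  rw [Finset.prod_mul_distrib, ← Real.exp_sum]
  refine mul_le_mul_of_nonneg_left ?_ (Finset.prod_nonneg fun l _ => (hm0 n _).le)
  split_ifs with h
  · rw [← Finset.mul_sum, Finset.sum_sub_distrib]
    refine Real.one_le_exp (mul_nonneg ht0.le ?_)
    simp only [Finset.sum_const, Finset.card_univ, Fintype.card_fin, nsmul_eq_mul]
    linarith
  · exact (Real.exp_pos _).le

/-! ### Gaussian bounds for the posterior loss -/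

/-- Exponential lower bound for a likelihood factor, from `log (1 + x) ≥ x - x ^ 2 / 2 - O(|x| ^ 3)`;
the slack `ρ` absorbs the cubic remainder for small `x`. -/
lemma exp_le_one_add {ρ x : ℝ} (hρ : 0 < ρ) (h1 : |x| ≤ 1 / 2) (h2 : |x| ≤ ρ / 4) :
    Real.exp (x - (1 + ρ) * x ^ 2 / 2) ≤ 1 + x := by
  have hx := Real.abs_log_sub_add_sum_range_le (x := -x) (by rw [abs_neg]; linarith) 2
  simp only [Finset.sum_range_succ, Finset.sum_range_zero, abs_neg, sub_neg_eq_add] at hx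
  norm_num at hx
  have h3 : |x| ^ 3 / (1 - |x|) ≤ ρ * x ^ 2 / 2 := by
    rw [div_le_iff₀ (by linarith), ← sq_abs x]
    have h0 := abs_nonneg x
    have : |x| ^ 2 * |x| ≤ |x| ^ 2 * (ρ / 4) := by gcongr
    have h4 : 0 ≤ ρ * |x| ^ 2 * (1 / 2 - |x|) := by
      apply mul_nonneg (by positivity); linarith
    nlinarith
  have h5 := (abs_le.1 (hx.trans h3)).1
  have hpos : 0 < 1 + x := by linarith [(abs_le.1 h1).1]
  rw [← Real.le_log_iff_exp_le hpos]
  nlinarith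

lemma symm_convex {u z b : ℝ} (hu : 1 ≤ u) : 2 * |z| ^ u ≤ |b - z| ^ u + |b + z| ^ u := by
  have hc := (convexOn_rpow hu).2 (abs_nonneg (b - z)) (abs_nonneg (b + z))
    (by norm_num : (0:ℝ) ≤ 1/2) (by norm_num : (0:ℝ) ≤ 1/2) (by norm_num)
  simp only [smul_eq_mul] at hc
  have h1 : |z| ≤ 1 / 2 * |b - z| + 1 / 2 * |b + z| := by
    have := abs_sub (b + z) (b - z)
    rw [show b + z - (b - z) = 2 * z by ring, abs_mul, abs_two] at this
    linarith
  have h2 := Real.rpow_le_rpow (abs_nonneg z) h1 (by linarith : 0 ≤ u)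
  linarith

/-- Anderson-type bound: against a Gaussian weight centred at `c` and truncated symmetrically, no
guess `a` has smaller `u`-loss than `c` itself. -/
lemma gauss_loss_le {u J B : ℝ} (hu : 1 ≤ u) (hB : 0 < B) (a c : ℝ) :
    ENNReal.ofReal (∫ z in (-B)..B, Real.exp (-(J * z ^ 2) / 2) * |z| ^ u) ≤
      ∫⁻ h in Set.Icc (c - B) (c + B),
        ENNReal.ofReal (Real.exp (-(J * (h - c) ^ 2) / 2) * |a - h| ^ u) := by
  have hcont : ∀ b : ℝ, Continuous fun z : ℝ => Real.exp (-(J * z ^ 2) / 2) * |b - z| ^ u :=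
    fun b => (by fun_prop : Continuous fun z : ℝ => Real.exp (-(J * z ^ 2) / 2)).mul
      ((by fun_prop : Continuous fun z : ℝ => |b - z|).rpow_const fun _ => Or.inr (by linarith))
  have hcont2 : Continuous fun h : ℝ => Real.exp (-(J * (h - c) ^ 2) / 2) * |a - h| ^ u :=
    (by fun_prop : Continuous fun h : ℝ => Real.exp (-(J * (h - c) ^ 2) / 2)).mul
      ((by fun_prop : Continuous fun h : ℝ => |a - h|).rpow_const fun _ => Or.inr (by linarith))
  rw [← ofReal_integral_eq_lintegral_ofReal (hcont2.continuousOn.integrableOn_Icc)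
    (.of_forall fun h => by positivity)]
  refine ENNReal.ofReal_le_ofReal ?_
  rw [integral_Icc_eq_integral_Ioc, ← intervalIntegral.integral_of_le (by linarith)]
  have e1 : ∫ h in (c - B)..(c + B), Real.exp (-(J * (h - c) ^ 2) / 2) * |a - h| ^ u =
      ∫ z in (-B)..B, Real.exp (-(J * z ^ 2) / 2) * |(a - c) - z| ^ u := by
    have := intervalIntegral.integral_comp_sub_right
      (fun z => Real.exp (-(J * z ^ 2) / 2) * |(a - c) - z| ^ u) c (a := c - B) (b := c + B)
    rw [show c - B - c = -B by ring, show c + B - c = B by ring] at this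
    rw [← this]
    congr 1; ext h
    rw [show a - c - (h - c) = a - h by ring]
  have e2 : ∫ z in (-B)..B, Real.exp (-(J * z ^ 2) / 2) * |(a - c) - z| ^ u =
      ∫ z in (-B)..B, Real.exp (-(J * z ^ 2) / 2) * |-(a - c) - z| ^ u := by
    have := intervalIntegral.integral_comp_neg
      (fun z => Real.exp (-(J * z ^ 2) / 2) * |-(a - c) - z| ^ u) (a := -B) (b := B)
    rw [neg_neg] at this
    rw [← this]
    congr 1; ext h
    rw [neg_sq, ← abs_neg]
    ring_nf
  have e3 : 2 * ∫ z in (-B)..B, Real.exp (-(J * z ^ 2) / 2) * |z| ^ u ≤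
      ∫ z in (-B)..B, (Real.exp (-(J * z ^ 2) / 2) * |(a - c) - z| ^ u +
        Real.exp (-(J * z ^ 2) / 2) * |-(a - c) - z| ^ u) := by
    rw [← intervalIntegral.integral_const_mul]
    refine intervalIntegral.integral_mono_on (by linarith) ?_ ?_ ?_
    · refine Continuous.intervalIntegrable ?_ _ _
      have := hcont 0
      simp only [zero_sub, abs_neg] at this
      exact this.const_mul 2
    · exact ((hcont _).add (hcont _)).intervalIntegrable _ _
    · intro z _
      have := symm_convex (z := z) (b := a - c) hu
      rw [show |-(a - c) - z| = |a - c + z| by rw [← abs_neg]; ring_nf]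
      have h0 := (Real.exp_pos (-(J * z ^ 2) / 2)).le
      nlinarith [mul_le_mul_of_nonneg_left this h0]
  rw [intervalIntegral.integral_add ((hcont _).intervalIntegrable _ _)
    ((hcont _).intervalIntegrable _ _), ← e2] at e3
  rw [e1]; linarith

/-- Posterior loss of a single sample. Here `w l` is the likelihood factor at the base point and
`x l` the normalized score, so `w l * (1 + h * x l)` is the factor at local parameter `h`. When the
squared scores sum to at most `K` and the total score `S` to at most `R` in absolute value, the
likelihood on `[-H, H]` dominates a Gaussian in `h` of precision `J > K` centred at `S / J`. -/
lemma likelihood_loss_le {n : ℕ} {u J K H B ρ R θ : ℝ} (hu : 1 ≤ u) (hB : 0 < B) (hρ : 0 < ρ)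
    (hJ : J = (1 + ρ) * K) (hI : 0 < J) (hR : R ≤ J * (H - B)) (hH : 0 ≤ H)
    (w x : Fin n → ℝ) (hw : ∀ l, 0 < w l) (hx : ∀ l, |x l| ≤ θ)
    (h1 : H * θ ≤ 1 / 2) (h2 : H * θ ≤ ρ / 4)
    (hV : ∑ l, x l ^ 2 ≤ K) (hS : |∑ l, x l| ≤ R) (a : ℝ) :
    ENNReal.ofReal ((∏ l, w l) * Real.exp ((∑ l, x l) ^ 2 / (2 * J)) *
        ∫ z in (-B)..B, Real.exp (-(J * z ^ 2) / 2) * |z| ^ u) ≤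
      ∫⁻ h in Set.Icc (-H) H,
        (∏ l, ENNReal.ofReal (w l * (1 + h * x l))) * ENNReal.ofReal (|a - h| ^ u) := by
  set S := ∑ l, x l with hSdef
  have hc0 : 0 ≤ (∏ l, w l) * Real.exp (S ^ 2 / (2 * J)) :=
    mul_nonneg (Finset.prod_nonneg fun l _ => (hw l).le) (Real.exp_pos _).le
  have hSJ : |S / J| ≤ H - B := by
    rw [abs_div, abs_of_pos hI, div_le_iff₀ hI]; linarith
  have hsub : Set.Icc (S / J - B) (S / J + B) ⊆ Set.Icc (-H) H := by
    have := abs_le.1 hSJ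
    exact Set.Icc_subset_Icc (by linarith) (by linarith)
  rw [ENNReal.ofReal_mul hc0]
  refine le_trans (mul_le_mul_right (gauss_loss_le hu hB a (S / J)) _) ?_
  rw [← lintegral_const_mul' _ _ ENNReal.ofReal_ne_top]
  refine le_trans (setLIntegral_mono' measurableSet_Icc ?_) (lintegral_mono_set hsub)
  intro h hh
  have hhH : |h| ≤ H := abs_le.2 (hsub hh)
  have hxl : ∀ l, |h * x l| ≤ H * θ := fun l => by
    rw [abs_mul]; exact mul_le_mul hhH (hx l) (abs_nonneg _) hH
  have hexp : ∀ l, Real.exp (h * x l - (1 + ρ) * (h * x l) ^ 2 / 2) ≤ 1 + h * x l := fun l =>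
    exp_le_one_add hρ ((hxl l).trans h1) ((hxl l).trans h2)
  rw [← ENNReal.ofReal_prod_of_nonneg fun l _ => mul_nonneg (hw l).le
    ((Real.exp_pos _).le.trans (hexp l)), ← ENNReal.ofReal_mul hc0, ← ENNReal.ofReal_mul
    (Finset.prod_nonneg fun l _ => mul_nonneg (hw l).le ((Real.exp_pos _).le.trans (hexp l)))]
  refine ENNReal.ofReal_le_ofReal ?_
  rw [← mul_assoc]
  refine mul_le_mul_of_nonneg_right ?_ (by positivity)
  rw [Finset.prod_mul_distrib, mul_assoc]
  refine mul_le_mul_of_nonneg_left ?_ (Finset.prod_nonneg fun l _ => (hw l).le)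
  refine le_trans ?_ (Finset.prod_le_prod (fun l _ => (Real.exp_pos _).le) fun l _ => hexp l)
  rw [← Real.exp_sum, ← Real.exp_add]
  refine Real.exp_le_exp.2 ?_
  have e : ∑ l, (h * x l - (1 + ρ) * (h * x l) ^ 2 / 2) =
      h * S - (1 + ρ) * h ^ 2 / 2 * ∑ l, x l ^ 2 := by
    rw [Finset.sum_sub_distrib, hSdef, Finset.mul_sum, Finset.mul_sum]
    congr 1
    exact Finset.sum_congr rfl fun l _ => by ring
  rw [e]
  have e2 : S ^ 2 / (2 * J) + -(J * (h - S / J) ^ 2) / 2 = h * S - h ^ 2 / 2 * J := by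
    field_simp; ring
  rw [e2, hJ]
  have : (1 + ρ) * h ^ 2 / 2 * ∑ l, x l ^ 2 ≤ (1 + ρ) * h ^ 2 / 2 * K := by gcongr
  nlinarith

/-- The function `s ↦ exp (s ^ 2 / (2 J))` multiplied by a continuous cutoff, equal to one for
`|s| ≤ R - 1` and to zero for `|s| ≥ R`, as a bounded continuous function. The cutoff makes the
central limit theorem applicable. -/
noncomputable def trunc (R J : ℝ) (hJ : 0 < J) : BoundedContinuousFunction ℝ ℝ :=
  BoundedContinuousFunction.ofNormedAddCommGroup
    (fun s => max 0 (min 1 (R - |s|)) * Real.exp (s ^ 2 / (2 * J))) (by fun_prop)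
    (Real.exp (R ^ 2 / (2 * J))) (by
      intro s
      rw [Real.norm_of_nonneg (by positivity)]
      by_cases h : |s| ≤ R
      · have h1 : max 0 (min 1 (R - |s|)) ≤ 1 := max_le zero_le_one (min_le_left _ _)
        have h2 : s ^ 2 ≤ R ^ 2 := sq_le_sq' (by linarith [neg_abs_le s]) ((le_abs_self s).trans h)
        calc _ ≤ 1 * Real.exp (s ^ 2 / (2 * J)) := by gcongr
          _ ≤ _ := by rw [one_mul]; gcongr
      · have : max 0 (min 1 (R - |s|)) = 0 :=
          max_eq_left ((min_le_right _ _).trans (by linarith))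
        rw [this, zero_mul]; positivity)

lemma trunc_apply (R J : ℝ) (hJ : 0 < J) (s : ℝ) :
    trunc R J hJ s = max 0 (min 1 (R - |s|)) * Real.exp (s ^ 2 / (2 * J)) := rfl

lemma trunc_nonneg (R J : ℝ) (hJ : 0 < J) (s : ℝ) : 0 ≤ trunc R J hJ s := by
  rw [trunc_apply]; positivity

lemma trunc_le (R J : ℝ) (hJ : 0 < J) (s : ℝ) : trunc R J hJ s ≤ Real.exp (R ^ 2 / (2 * J)) := by
  have := (BoundedContinuousFunction.norm_coe_le_norm (trunc R J hJ) s).trans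
    (BoundedContinuousFunction.norm_ofNormedAddCommGroup_le _ (Real.exp_pos _).le _)
  exact (Real.le_norm_self _).trans this

open Topology in
/-- Lower bound for the one-dimensional Bayes risk in the local parameter `h ∈ [-H, H]` along a
triangular array, uniformly over estimators `a`, in terms of a Gaussian integral. -/
lemma eventually_oneDim {L : ℕ} {u J H B R : ℝ} (hu : 1 ≤ u) (hB : 0 < B)
    (m : ℕ → Fin L → ℝ) (μ v : Fin L → ℝ)
    (hm0 : ∀ n j, 0 < m n j) (hm1 : ∀ n, ∑ j, m n j = 1)
    (hμ0 : ∀ j, 0 < μ j) (hv : ∑ j, v j = 0)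
    (hm : ∀ j, Tendsto (fun n => m n j) atTop (𝓝 (μ j)))
    (I : ℝ≥0) (hI : (I : ℝ) = ∑ j, v j ^ 2 / μ j) (hIJ : I < J) (hJ0 : 0 < J) (hH : 0 ≤ H)
    (hR : R ≤ J * (H - B)) {c : ℝ}
    (hc : c < (∫ z in (-B)..B, Real.exp (-(J * z ^ 2) / 2) * |z| ^ u) *
      ∫ s, trunc R J hJ0 s ∂(gaussianReal 0 I)) :
    ∀ᶠ n : ℕ in atTop, ∀ a : (Fin n → Fin L) → ℝ, ENNReal.ofReal c ≤
      ∑ y : Fin n → Fin L, ∫⁻ h in Set.Icc (-H) H,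
        (∏ l, ENNReal.ofReal (m n (y l) + h / √n * v (y l))) * ENNReal.ofReal (|a y - h| ^ u) := by
  have hμ1 : ∑ j, μ j = 1 := by
    refine tendsto_nhds_unique (tendsto_finsetSum Finset.univ fun j _ => hm j) ?_
    simp_rw [hm1]; exact tendsto_const_nhds
  set cB := ∫ z in (-B)..B, Real.exp (-(J * z ^ 2) / 2) * |z| ^ u with hcB
  have hcB0 : 0 ≤ cB := intervalIntegral.integral_nonneg (by linarith) fun z _ => by positivity
  have hI0 : (0:ℝ) ≤ I := I.2
  obtain ⟨K, hIK, hKJ⟩ := exists_between hIJ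
  have hK0 : 0 < K := lt_of_le_of_lt hI0 hIK
  set ρ := J / K - 1 with hρdef
  have hρ : 0 < ρ := by rw [hρdef, sub_pos, one_lt_div hK0]; exact hKJ
  have hJK : J = (1 + ρ) * K := by rw [hρdef]; field_simp; ring
  have hA := clt_weights m μ v hm0 hm1 hμ0 hv hm I hI (trunc R J hJ0)
  have hV := lln_weights m μ v hm0 hμ0 hμ1 hm K (by rw [← hI]; exact hIK)
  have hlim := (hA.sub (hV.const_mul (Real.exp (R ^ 2 / (2 * J))))).const_mul cB
  rw [mul_zero, sub_zero] at hlim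
  have hθ : Tendsto (fun n : ℕ => H * ∑ j, |v j / m n j / √n|) atTop (𝓝 0) := by
    have : Tendsto (fun n : ℕ => H * ∑ j, |v j / m n j / √n|) atTop
        (𝓝 (H * ∑ j : Fin L, (0:ℝ))) := by
      refine (tendsto_finsetSum _ fun j _ => ?_).const_mul H
      have hs : Tendsto (fun n : ℕ => √(n:ℝ)) atTop atTop :=
        tendsto_sqrt_atTop.comp tendsto_natCast_atTop_atTop
      have := ((tendsto_const_nhds (x := v j)).div (hm j) (hμ0 j).ne').div_atTop hs
      simpa using this.abs
    simpa using this
  filter_upwards [hlim.eventually (lt_mem_nhds hc), eventually_gt_atTop 0,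
    hθ.eventually (gt_mem_nhds (by norm_num : (0:ℝ) < 1 / 2)),
    hθ.eventually (gt_mem_nhds (by positivity : (0:ℝ) < ρ / 4))] with n hn hn0 hθ1 hθ2 a
  have hnpos : (0:ℝ) < √n := Real.sqrt_pos.2 (by exact_mod_cast hn0)
  have hw0 : ∀ (y : Fin n → Fin L), 0 ≤ ∏ l, m n (y l) := fun y =>
    Finset.prod_nonneg fun l _ => (hm0 n _).le
  set θ := ∑ j, |v j / m n j / √n| with hθdef
  let G : (Fin n → Fin L) → ℝ := fun y => (∏ l, m n (y l)) *
    (max 0 (trunc R J hJ0 (∑ l, v (y l) / m n (y l) / √n) - Real.exp (R ^ 2 / (2 * J)) *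
      (if n * K < ∑ l, (v (y l) / m n (y l)) ^ 2 then 1 else 0))) * cB
  have hG0 : ∀ y, 0 ≤ G y := fun y => mul_nonneg (mul_nonneg (hw0 y) (le_max_left _ _)) hcB0
  have hcG : c ≤ ∑ y, G y := by
    refine hn.le.trans ?_
    rw [Finset.mul_sum, ← Finset.sum_sub_distrib, Finset.mul_sum]
    refine Finset.sum_le_sum fun y _ => ?_
    simp only [G]
    rw [mul_comm cB]
    refine mul_le_mul_of_nonneg_right ?_ hcB0
    rw [mul_left_comm, ← mul_sub]
    exact mul_le_mul_of_nonneg_left (le_max_right _ _) (hw0 y)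
  refine (ENNReal.ofReal_le_ofReal hcG).trans ?_
  rw [ENNReal.ofReal_sum_of_nonneg fun y _ => hG0 y]
  refine Finset.sum_le_sum fun y _ => ?_
  by_cases hz : G y = 0
  · rw [hz, ENNReal.ofReal_zero]; exact zero_le
  have hVy : ¬ (n * K < ∑ l, (v (y l) / m n (y l)) ^ 2) := by
    intro h
    apply hz
    simp only [G]
    have htr := trunc_le R J hJ0 (∑ l, v (y l) / m n (y l) / √n)
    rw [if_pos h, mul_one, max_eq_left (by linarith)]
    ring
  have hSy : |∑ l, v (y l) / m n (y l) / √n| ≤ R := by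
    by_contra! h
    apply hz
    simp only [G]
    rw [if_neg hVy, trunc_apply, max_eq_left (a := 0) (b := min 1 _)
      ((min_le_right _ _).trans (by linarith))]
    simp
  have hbound := likelihood_loss_le hu hB hρ hJK hJ0 hR hH (fun l => m n (y l))
    (fun l => v (y l) / m n (y l) / √n) (fun l => hm0 n _)
    (fun l => Finset.single_le_sum (f := fun j => |v j / m n j / √n|) (fun j _ => abs_nonneg _)
      (Finset.mem_univ (y l))) hθ1.le hθ2.le (by
      have : ∀ l, (v (y l) / m n (y l) / √n) ^ 2 = (v (y l) / m n (y l)) ^ 2 / n := fun l => by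
        rw [div_pow _ (√(n:ℝ)), Real.sq_sqrt (Nat.cast_nonneg n)]
      simp_rw [this]
      rw [← Finset.sum_div, div_le_iff₀ (by exact_mod_cast hn0)]
      linarith) hSy (a y)
  refine le_trans (ENNReal.ofReal_le_ofReal ?_) (hbound.trans (le_of_eq ?_))
  · simp only [G]
    refine mul_le_mul_of_nonneg_right (mul_le_mul_of_nonneg_left ?_ (hw0 y)) hcB0
    rw [if_neg hVy, mul_zero, sub_zero, max_eq_right (trunc_nonneg _ _ _ _), trunc_apply]
    exact mul_le_of_le_one_left (Real.exp_pos _).le (max_le zero_le_one (min_le_left _ _))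
  · refine lintegral_congr fun h => ?_
    congr 1
    refine Finset.prod_congr rfl fun l _ => ?_
    congr 1
    have := (hm0 n (y l)).ne'
    field_simp

/-! ### The one-dimensional local minimax bound -/

lemma integral_trunc_ge {I : ℝ≥0} {J R : ℝ} (hI : 0 < I) (hIJ : I < J) (hJ : 0 < J) (hR : 1 ≤ R) :
    (√(2 * π * I))⁻¹ * (2 * (R - 1)) * Real.exp (-(R ^ 2 * (1 / I - 1 / J) / 2)) ≤
      ∫ s, trunc R J hJ s ∂(gaussianReal 0 I) := by
  have hI' : (0:ℝ) < I := hI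
  rw [integral_gaussianReal_eq_integral_smul hI.ne']
  simp only [smul_eq_mul]
  have hint : Integrable fun s => gaussianPDFReal 0 I s * trunc R J hJ s :=
    (integrable_gaussianPDFReal 0 I).mul_bdd (c := Real.exp (R ^ 2 / (2 * J)))
      (trunc R J hJ).continuous.aestronglyMeasurable
      (.of_forall fun s => by
        rw [Real.norm_of_nonneg (trunc_nonneg _ _ _ _)]; exact trunc_le _ _ _ _)
  have h0 : ∀ s, 0 ≤ gaussianPDFReal 0 I s * trunc R J hJ s := fun s =>
    mul_nonneg (gaussianPDFReal_nonneg _ _ _) (trunc_nonneg _ _ _ _)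
  refine le_trans ?_ (setIntegral_le_integral (s := Set.Icc (-(R - 1)) (R - 1)) hint
    (.of_forall h0))
  have hconst : ∀ s ∈ Set.Icc (-(R - 1)) (R - 1),
      (√(2 * π * I))⁻¹ * Real.exp (-(R ^ 2 * (1 / I - 1 / J) / 2)) ≤
        gaussianPDFReal 0 I s * trunc R J hJ s := by
    intro s hs
    have hs' : |s| ≤ R - 1 := abs_le.2 hs
    rw [trunc_apply, min_eq_left (by linarith), max_eq_right zero_le_one, one_mul, gaussianPDFReal,
      mul_assoc (√(2 * π * (I:ℝ)))⁻¹, ← Real.exp_add]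
    gcongr
    have hd : 0 ≤ 1 / (I:ℝ) - 1 / J := by
      rw [sub_nonneg]; exact one_div_le_one_div_of_le hI' hIJ.le
    have hs2 : s ^ 2 ≤ R ^ 2 := by
      rw [← sq_abs s]; gcongr; linarith
    have e : -(s - 0) ^ 2 / (2 * I) + s ^ 2 / (2 * J) = -(s ^ 2 * (1 / I - 1 / J) / 2) := by
      field_simp; ring
    rw [e]
    gcongr
  have hvol : volume.real (Set.Icc (-(R - 1)) (R - 1)) = 2 * (R - 1) := by
    rw [Real.volume_real_Icc_of_le (by linarith)]; ring
  calc _ = ∫ s in Set.Icc (-(R - 1)) (R - 1),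
        (√(2 * π * I))⁻¹ * Real.exp (-(R ^ 2 * (1 / I - 1 / J) / 2)) := by
        rw [setIntegral_const, hvol, smul_eq_mul]; ring
    _ ≤ _ := setIntegral_mono_on (integrableOn_const (by simp)) hint.integrableOn
        measurableSet_Icc hconst

lemma integrable_gauss_abs {u J : ℝ} (hu : 1 ≤ u) (hJ : 0 < J) :
    Integrable fun z : ℝ => Real.exp (-(J * z ^ 2) / 2) * |z| ^ u := by
  have h := (integrable_rpow_mul_exp_neg_mul_sq (b := J / 2) (by positivity)
    (s := u) (by linarith))
  have hIoi : IntegrableOn (fun z : ℝ => Real.exp (-(J * z ^ 2) / 2) * |z| ^ u) (Set.Ioi 0) := by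
    refine h.integrableOn.congr_fun (fun z hz => ?_) measurableSet_Ioi
    rw [abs_of_pos hz, mul_comm]
    ring_nf
  have hIio : IntegrableOn (fun z : ℝ => Real.exp (-(J * z ^ 2) / 2) * |z| ^ u) (Set.Iic 0) := by
    rw [integrableOn_Iic_iff_integrableOn_Iio, ← integrable_indicator_iff measurableSet_Iio]
    rw [← integrable_indicator_iff measurableSet_Ioi] at hIoi
    refine hIoi.comp_neg.congr (.of_forall fun z => ?_)
    simp [Set.indicator]
  rw [← integrableOn_univ, ← Set.Iic_union_Ioi (a := (0:ℝ))]
  exact hIio.union hIoi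

/-- The constant `C_u * I ^ (-u / 2)` as a Gaussian integral of precision `I`; the prefactor is
arranged as it appears in the limit of the one-dimensional Bayes risk. -/
lemma Cmom_scale {u I : ℝ} (hI : 0 < I) :
    Cmom u * I ^ (-(u / 2)) = (√(2 * π * I))⁻¹ * I *
      ∫ z, Real.exp (-(I * z ^ 2) / 2) * |z| ^ u := by
  have hs : 0 < √I := Real.sqrt_pos.2 hI
  rw [Cmom, integral_gaussianReal_eq_integral_smul one_ne_zero]
  simp only [gaussianPDFReal, smul_eq_mul, NNReal.coe_one, mul_one, sub_zero, mul_assoc]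
  rw [integral_const_mul]
  have h := Measure.integral_comp_mul_left (fun x : ℝ => Real.exp (-x ^ 2 / 2) * |x| ^ u) (√I)
  have h2 : ∀ z : ℝ, Real.exp (-(√I * z) ^ 2 / 2) * |√I * z| ^ u =
      I ^ (u / 2) * (Real.exp (-(I * z ^ 2) / 2) * |z| ^ u) := by
    intro z
    rw [mul_pow, Real.sq_sqrt hI.le, abs_mul, Real.mul_rpow (abs_nonneg _) (abs_nonneg _),
      abs_of_pos hs, Real.sqrt_eq_rpow, ← Real.rpow_mul hI.le]
    rw [show 1 / 2 * u = u / 2 by ring]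
    ring
  simp_rw [h2] at h
  rw [integral_const_mul, abs_of_pos (inv_pos.2 hs), smul_eq_mul, inv_mul_eq_div,
    eq_div_iff hs.ne'] at h
  rw [← h, Real.rpow_neg hI.le]
  have hIu : I ^ (u / 2) ≠ 0 := (Real.rpow_pos_of_pos hI _).ne'
  have e : √(2 * (π * I)) = √(2 * π) * √I := by
    rw [← mul_assoc, Real.sqrt_mul (by positivity)]
  have hI2 : I = √I * √I := (Real.mul_self_sqrt hI.le).symm
  rw [e]
  have h2pi : √(2 * π) ≠ 0 := (Real.sqrt_pos.2 (by positivity)).ne'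
  generalize (∫ z, Real.exp (-(I * z ^ 2) / 2) * |z| ^ u) = W
  generalize hw : I ^ (u / 2) = w at *
  calc _ = (√(2 * π))⁻¹ * (√I * W) := by field_simp
    _ = _ := by
      nth_rewrite 3 [hI2]
      field_simp

open Topology in
/-- One-dimensional local asymptotic minimax bound: for `c` below `C_u * F ^ (-u / 2)`, with `F` the
Fisher information, there is a half-length `H` of the local prior such that the Bayes risk under
the uniform prior on `[-H, H]` is eventually at least `c`, along every array `m n → μ`. -/
lemma exists_oneDim {L : ℕ} {u c : ℝ} (hu : 1 ≤ u) (μ v : Fin L → ℝ)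
    (hμ0 : ∀ j, 0 < μ j) (hv : ∑ j, v j = 0) {F : ℝ} (hF : F = ∑ j, v j ^ 2 / μ j) (hF0 : 0 < F)
    (hc : c < Cmom u * F ^ (-(u / 2))) :
    ∃ H > 0, ∀ m : ℕ → Fin L → ℝ, (∀ n j, 0 < m n j) → (∀ n, ∑ j, m n j = 1) →
      (∀ j, Tendsto (fun n => m n j) atTop (𝓝 (μ j))) →
      ∀ᶠ n : ℕ in atTop, ∀ a : (Fin n → Fin L) → ℝ, ENNReal.ofReal (2 * H * c) ≤
        ∑ y : Fin n → Fin L, ∫⁻ h in Set.Icc (-H) H,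
          (∏ l, ENNReal.ofReal (m n (y l) + h / √n * v (y l))) *
            ENNReal.ofReal (|a y - h| ^ u) := by
  obtain ⟨I, rfl⟩ : ∃ I : ℝ≥0, F = I := ⟨⟨F, hF0.le⟩, rfl⟩
  have hI : 0 < I := hF0
  rw [Cmom_scale hF0] at hc
  set P := (√(2 * π * (I:ℝ)))⁻¹ with hP
  -- choice of the truncation `B` of the loss integral
  obtain ⟨B, hcB, hB⟩ : ∃ B : ℝ, c < P * I * (∫ z in (-B)..B,
      Real.exp (-(I * z ^ 2) / 2) * |z| ^ u) ∧ 0 < B := by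
    have := (intervalIntegral_tendsto_integral (integrable_gauss_abs hu hF0)
      tendsto_neg_atTop_atBot tendsto_id).const_mul (P * I)
    exact ((this.eventually (lt_mem_nhds hc)).and (eventually_gt_atTop 0)).exists
  -- choice of the half-length `H` of the prior interval
  obtain ⟨H, hcH, hH0, hHB⟩ : ∃ H : ℝ, c < P * (∫ z in (-B)..B,
      Real.exp (-(I * z ^ 2) / 2) * |z| ^ u) * (I - (I * B + 1) / H) ∧ 0 < H ∧
      B + 1 / I ≤ H := by
    have h1 : Tendsto (fun H : ℝ => P * (∫ z in (-B)..B,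
      Real.exp (-(I * z ^ 2) / 2) * |z| ^ u) * (I - (I * B + 1) / H)) atTop
      (𝓝 (P * (∫ z in (-B)..B, Real.exp (-(I * z ^ 2) / 2) * |z| ^ u) * (I - 0))) :=
      ((tendsto_const_nhds.div_atTop tendsto_id).const_sub _).const_mul _
    rw [sub_zero, mul_right_comm] at h1
    exact ((h1.eventually (lt_mem_nhds hcB)).and ((eventually_gt_atTop 0).and
      (eventually_ge_atTop _))).exists
  set R := I * (H - B) with hR
  have hR1 : 1 ≤ R := by
    have : (I:ℝ) * (1 / I) ≤ I * (H - B) := by gcongr; linarith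
    rwa [mul_one_div_cancel hF0.ne'] at this
  have hHR : 2 * H * c < (∫ z in (-B)..B, Real.exp (-(I * z ^ 2) / 2) * |z| ^ u) *
      (P * (2 * (R - 1)) * Real.exp (-(R ^ 2 * (1 / I - 1 / I) / 2))) := by
    rw [sub_self, mul_zero, zero_div, neg_zero, Real.exp_zero, mul_one]
    have := mul_lt_mul_of_pos_left hcH (by positivity : 0 < 2 * H)
    refine this.trans_eq ?_
    rw [hR]
    field_simp
    ring
  -- choice of the inflated information `J`
  obtain ⟨J, hJ, hIJ⟩ : ∃ J : ℝ, 2 * H * c <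
      (∫ z in (-B)..B, Real.exp (-(J * z ^ 2) / 2) * |z| ^ u) *
      (P * (2 * (R - 1)) * Real.exp (-(R ^ 2 * (1 / I - 1 / J) / 2))) ∧ I < J := by
    have hcont : ContinuousAt (fun J : ℝ =>
        (∫ z in (-B)..B, Real.exp (-(J * z ^ 2) / 2) * |z| ^ u) *
        (P * (2 * (R - 1)) * Real.exp (-(R ^ 2 * (1 / I - 1 / J) / 2)))) I := by
      refine ContinuousAt.mul (Continuous.continuousAt ?_) ?_
      · refine intervalIntegral.continuous_parametric_intervalIntegral_of_continuous' ?_ _ _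
        refine Continuous.mul (by fun_prop) (Continuous.rpow_const (by fun_prop) ?_)
        exact fun _ => Or.inr (by linarith)
      · have : ContinuousAt (fun J : ℝ => 1 / J) I :=
          continuousAt_const.div continuousAt_id hF0.ne'
        fun_prop
    have h1 : ∀ᶠ J in 𝓝[>] (I:ℝ), _ := (hcont.eventually (lt_mem_nhds hHR)).filter_mono
      nhdsWithin_le_nhds
    exact (h1.and self_mem_nhdsWithin).exists
  have hJ0 : 0 < J := hF0.trans hIJ
  refine ⟨H, hH0, fun m hm0 hm1 hm => ?_⟩
  refine eventually_oneDim (J := J) (B := B) (R := R) hu hB m μ v hm0 hm1 hμ0 hv hm I hF hIJ hJ0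
    hH0.le ?_ ?_
  · rw [hR]
    refine mul_le_mul_of_nonneg_right hIJ.le ?_
    have : 0 < 1 / (I:ℝ) := by positivity
    linarith
  · refine hJ.trans_le (mul_le_mul_of_nonneg_left (integral_trunc_ge hI hIJ hJ0 hR1) ?_)
    exact intervalIntegral.integral_nonneg (by linarith) fun z _ => by positivity

/-! ### Geometry of the prior sets -/

/-- The affine parametrization `x ↦ (1 - ∑ x, x)` of the hyperplane `∑ p = 1`. -/
noncomputable def hyperChart (K : ℕ) (x : Fin K → ℝ) : Fin (K + 1) → ℝ := Fin.cons (1 - ∑ i, x i) x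

lemma hyperChart_continuous (K : ℕ) : Continuous (hyperChart K) := by
  refine continuous_pi fun i => ?_
  refine Fin.cases ?_ (fun j => ?_) i
  · simp only [hyperChart, Fin.cons_zero]; fun_prop
  · simp only [hyperChart, Fin.cons_succ]; fun_prop

lemma hyperChart_lipschitz (K : ℕ) : LipschitzWith (K + 1 : ℝ≥0) (hyperChart K) := by
  refine LipschitzWith.of_dist_le_mul fun x y => ?_
  rw [dist_pi_le_iff (by positivity)]
  intro i
  refine Fin.cases ?_ (fun j => ?_) i
  · simp only [hyperChart, Fin.cons_zero, Real.dist_eq, NNReal.coe_add, NNReal.coe_natCast,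
      NNReal.coe_one]
    have h1 : |(1 - ∑ i, x i) - (1 - ∑ i, y i)| ≤ ∑ i, |x i - y i| := by
      rw [show (1 - ∑ i, x i) - (1 - ∑ i, y i) = -∑ i, (x i - y i) by
        rw [Finset.sum_sub_distrib]; ring, abs_neg]
      exact Finset.abs_sum_le_sum_abs _ _
    have h2 : ∑ i, |x i - y i| ≤ ∑ _i : Fin K, dist x y :=
      Finset.sum_le_sum fun i _ => by rw [← Real.dist_eq]; exact dist_le_pi_dist x y i
    have := dist_nonneg (x := x) (y := y)
    simp only [Finset.sum_const, Finset.card_univ, Fintype.card_fin, nsmul_eq_mul] at h2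
    nlinarith
  · simp only [hyperChart, Fin.cons_succ, NNReal.coe_add, NNReal.coe_natCast, NNReal.coe_one]
    have := dist_nonneg (x := x) (y := y)
    have h := dist_le_pi_dist x y j
    have : (0:ℝ) ≤ K * dist x y := by positivity
    linarith

lemma hyperChart_tail {K : ℕ} {p : Fin (K + 1) → ℝ} (hp : ∑ i, p i = 1) :
    hyperChart K (Fin.tail p) = p := by
  rw [Fin.sum_univ_succ] at hp
  funext i
  refine Fin.cases ?_ (fun j => ?_) i
  · simp only [hyperChart, Fin.cons_zero, Fin.tail]; linarith
  · simp [hyperChart, Fin.tail]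

lemma hyperChart_sum {K : ℕ} (x : Fin K → ℝ) : ∑ i, hyperChart K x i = 1 := by
  rw [Fin.sum_univ_succ]; simp [hyperChart]

lemma hausdorff_eq_volume (K : ℕ) : (μH[(K : ℝ)] : Measure (Fin K → ℝ)) = volume := by
  have := hausdorffMeasure_pi_real (ι := Fin K)
  rwa [Fintype.card_fin] at this

lemma hausdorff_Pball_lt_top (K : ℕ) (D : ℝ) (n : ℕ) :
    (μH[(K : ℝ)]) (Pball (K + 1) D n) < ∞ := by
  have hsub : Pball (K + 1) D n ⊆ hyperChart K '' Set.Icc 0 1 := by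
    rintro p ⟨⟨hp0, hp1⟩, -⟩
    refine ⟨Fin.tail p, ⟨fun i => hp0 _, fun i => ?_⟩, hyperChart_tail hp1⟩
    rw [Pi.one_apply, ← hp1]
    exact Finset.single_le_sum (f := p) (fun j _ => hp0 j) (Finset.mem_univ i.succ)
  refine (measure_mono hsub).trans_lt (((hyperChart_lipschitz K).hausdorffMeasure_image_le
    (Nat.cast_nonneg K) _).trans_lt ?_)
  rw [hausdorff_eq_volume]
  exact ENNReal.mul_lt_top (ENNReal.rpow_lt_top_of_nonneg (Nat.cast_nonneg K) (by simp))
    isCompact_Icc.measure_lt_top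

/-- The prior set has positive `K`-dimensional measure, because dropping a coordinate is
`1`-Lipschitz and maps it onto a set with nonempty interior. -/
lemma hausdorff_Pball_pos (K : ℕ) {D : ℝ} (hD : 0 < D) {n : ℕ} (hn : 0 < n) :
    0 < (μH[(K : ℝ)]) (Pball (K + 1) D n) := by
  set U : Set (Fin K → ℝ) := {x | (∀ i, 0 < hyperChart K x i) ∧
    √(∑ i, (hyperChart K x i - 1 / ((K + 1 : ℕ) : ℝ)) ^ 2) < D / √n} with hU
  have hc := hyperChart_continuous K
  have hUo : IsOpen U := by
    refine IsOpen.and ?_ ?_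
    · simp only [Set.ofPred_forall]
      exact isOpen_iInter_of_finite fun i => isOpen_lt continuous_const (by fun_prop)
    · exact isOpen_lt (by fun_prop) continuous_const
  have hUne : U.Nonempty := by
    refine ⟨fun _ => 1 / ((K + 1 : ℕ) : ℝ), ?_⟩
    have hx : hyperChart K (fun _ => 1 / ((K + 1 : ℕ) : ℝ)) = fun _ => 1 / ((K + 1 : ℕ) : ℝ) := by
      refine hyperChart_tail (p := fun _ => 1 / ((K + 1 : ℕ) : ℝ)) ?_
      simp only [Finset.sum_const, Finset.card_univ, Fintype.card_fin, nsmul_eq_mul]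
      exact mul_one_div_cancel (by positivity)
    refine ⟨fun i => ?_, ?_⟩
    · rw [hx]; positivity
    · rw [hx]; simp only [sub_self]
      simp; positivity
  have hsub : U ⊆ (Fin.tail : (Fin (K + 1) → ℝ) → Fin K → ℝ) '' Pball (K + 1) D n := by
    rintro x ⟨h1, h2⟩
    exact ⟨hyperChart K x, ⟨⟨fun i => (h1 i).le, hyperChart_sum x⟩, h2.le⟩, by
      simp [hyperChart]⟩
  have hlip : LipschitzWith 1 (Fin.tail : (Fin (K + 1) → ℝ) → Fin K → ℝ) := by
    refine LipschitzWith.of_dist_le_mul fun x y => ?_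
    rw [NNReal.coe_one, one_mul, dist_pi_le_iff dist_nonneg]
    exact fun i => dist_le_pi_dist x y i.succ
  have h1 := hlip.hausdorffMeasure_image_le (Nat.cast_nonneg K) (Pball (K + 1) D n)
  rw [hausdorff_eq_volume, ENNReal.coe_one, ENNReal.one_rpow, one_mul] at h1
  exact (hUo.measure_pos volume hUne).trans_le ((measure_mono hsub).trans h1)

/-- A homothety of ratio `ρ` about the uniform distribution maps the prior set of radius `D` into
the one of radius `ρ * D`, and multiplies the `K`-dimensional measure by `ρ ^ K`. -/
lemma hausdorff_Pball_scale (K : ℕ) {ρ D : ℝ} (hρ0 : 0 < ρ) (hρ1 : ρ ≤ 1) (n : ℕ) :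
    ENNReal.ofReal (ρ ^ K) * (μH[(K : ℝ)]) (Pball (K + 1) D n) ≤
      (μH[(K : ℝ)]) (Pball (K + 1) (ρ * D) n) := by
  have h := hausdorffMeasure_homothety_image (d := K) (Nat.cast_nonneg K)
    (fun _ : Fin (K + 1) => 1 / ((K + 1 : ℕ) : ℝ)) hρ0.ne' (Pball (K + 1) D n)
  have e : (‖ρ‖₊ ^ (K:ℝ)) • (μH[(K : ℝ)]) (Pball (K + 1) D n) =
      ENNReal.ofReal (ρ ^ K) * (μH[(K : ℝ)]) (Pball (K + 1) D n) := by
    rw [ENNReal.smul_def, smul_eq_mul, NNReal.rpow_natCast, ENNReal.coe_pow,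
      ENNReal.ofReal_pow hρ0.le, Real.nnnorm_of_nonneg hρ0.le, ENNReal.ofReal_eq_coe_nnreal hρ0.le]
  rw [← e, ← h]
  refine measure_mono ?_
  rintro _ ⟨p, ⟨⟨hp0, hp1⟩, hp2⟩, rfl⟩
  have hk : (0:ℝ) < ((K + 1 : ℕ) : ℝ) := by positivity
  have hval : ∀ i, AffineMap.homothety (fun _ : Fin (K + 1) => 1 / ((K + 1 : ℕ) : ℝ)) ρ p i =
      ρ * p i + (1 - ρ) * (1 / ((K + 1 : ℕ) : ℝ)) := fun i => by
    simp only [AffineMap.homothety_apply, vsub_eq_sub, vadd_eq_add, Pi.add_apply, Pi.smul_apply,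
      Pi.sub_apply, smul_eq_mul]
    ring
  refine ⟨⟨fun i => ?_, ?_⟩, ?_⟩
  · rw [hval]
    have := hp0 i
    have : 0 ≤ 1 - ρ := by linarith
    positivity
  · simp_rw [hval]
    rw [Finset.sum_add_distrib, ← Finset.mul_sum, hp1]
    simp only [Finset.sum_const, Finset.card_univ, Fintype.card_fin, nsmul_eq_mul]
    field_simp
    ring
  · have : ∀ i, (ρ * p i + (1 - ρ) * (1 / ((K + 1 : ℕ) : ℝ)) - 1 / ((K + 1 : ℕ) : ℝ)) ^ 2 =
        ρ ^ 2 * (p i - 1 / ((K + 1 : ℕ) : ℝ)) ^ 2 := fun i => by ring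
    simp_rw [hval, this]
    rw [← Finset.mul_sum, Real.sqrt_mul (sq_nonneg _), Real.sqrt_sq hρ0.le, mul_div_assoc]
    gcongr

lemma isClosed_Pball (k : ℕ) (D : ℝ) (n : ℕ) : IsClosed (Pball k D n) := by
  refine IsClosed.and (IsClosed.and ?_ ?_) ?_
  · simp only [Set.ofPred_forall]
    exact isClosed_iInter fun i => isClosed_le continuous_const (by fun_prop)
  · exact isClosed_eq (by fun_prop) continuous_const
  · exact isClosed_le (by fun_prop) continuous_const

lemma sqrt_sum_sq_add_le {ι : Type*} [Fintype ι] (x y : ι → ℝ) :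
    √(∑ i, (x i + y i) ^ 2) ≤ √(∑ i, x i ^ 2) + √(∑ i, y i ^ 2) := by
  have := norm_add_le (WithLp.toLp 2 x) (WithLp.toLp 2 y)
  simpa [EuclideanSpace.norm_eq] using this

/-- Once the prior set lies in the interior of the simplex, a slightly smaller prior set can be
moved along a direction `d` of the hyperplane without leaving it. -/
lemma Pball_shift {k : ℕ} {D H : ℝ} {n : ℕ} {d : Fin k → ℝ} (hd : ∑ i, d i = 0)
    (hn : D / √n ≤ 1 / (k : ℝ)) {h : ℝ} (hh : |h| ≤ H) {p : Fin k → ℝ}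
    (hp : p ∈ Pball k (D - H * √(∑ i, d i ^ 2)) n) : p + (h / √n) • d ∈ Pball k D n := by
  obtain ⟨⟨hp0, hp1⟩, hp2⟩ := hp
  have hnorm : √(∑ i, ((p + (h / √n) • d) i - 1 / (k : ℝ)) ^ 2) ≤ D / √n := by
    have h1 := sqrt_sum_sq_add_le (fun i => p i - 1 / (k : ℝ)) (fun i => h / √n * d i)
    have h2 : √(∑ i, (h / √n * d i) ^ 2) ≤ H * √(∑ i, d i ^ 2) / √n := by
      simp_rw [mul_pow]
      rw [← Finset.mul_sum, Real.sqrt_mul (sq_nonneg _), Real.sqrt_sq_eq_abs, abs_div,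
        abs_of_nonneg (Real.sqrt_nonneg (n:ℝ)), div_mul_eq_mul_div]
      gcongr
    have h3 : ∀ i, (p + (h / √n) • d) i - 1 / (k : ℝ) = p i - 1 / (k : ℝ) + h / √n * d i :=
      fun i => by simp only [Pi.add_apply, Pi.smul_apply, smul_eq_mul]; ring
    simp_rw [h3]
    rw [sub_div] at hp2
    linarith
  refine ⟨⟨fun i => ?_, ?_⟩, hnorm⟩
  · have h1 : |(p + (h / √n) • d) i - 1 / (k : ℝ)| ≤ 1 / (k : ℝ) := by
      refine (Real.abs_le_sqrt ?_).trans (hnorm.trans hn)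
      exact Finset.single_le_sum (f := fun i => ((p + (h / √n) • d) i - 1 / (k : ℝ)) ^ 2)
        (fun j _ => sq_nonneg _) (Finset.mem_univ i)
    linarith [(abs_le.1 h1).1]
  · simp [Finset.sum_add_distrib, ← Finset.mul_sum, hp1, hd]

/-- Averaging over translates: the integral over the prior set dominates the average over a
smaller prior set of one-dimensional averages along the segments in direction `d`. -/
lemma lintegral_Pball_ge {K : ℕ} {D H : ℝ} {n : ℕ} {d : Fin (K + 1) → ℝ} (hd : ∑ i, d i = 0)
    (hn : D / √n ≤ 1 / ((K + 1 : ℕ) : ℝ)) {f : (Fin (K + 1) → ℝ) → ℝ≥0∞} (hf : Measurable f) :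
    ∫⁻ p in Pball (K + 1) (D - H * √(∑ i, d i ^ 2)) n,
        (∫⁻ h in Set.Icc (-H) H, f (p + (h / √n) • d)) ∂μH[(K : ℝ)] ≤
      ENNReal.ofReal (2 * H) * ∫⁻ p in Pball (K + 1) D n, f p ∂μH[(K : ℝ)] := by
  have : IsFiniteMeasure ((μH[(K : ℝ)] : Measure (Fin (K + 1) → ℝ)).restrict
      (Pball (K + 1) (D - H * √(∑ i, d i ^ 2)) n)) :=
    ⟨by rw [Measure.restrict_apply_univ]; exact hausdorff_Pball_lt_top _ _ _⟩
  rw [lintegral_lintegral_swap (by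
    refine Measurable.aemeasurable ?_
    simp only [Function.uncurry_def]
    exact hf.comp (by fun_prop))]
  have key : ∀ h ∈ Set.Icc (-H) H, ∫⁻ p in Pball (K + 1) (D - H * √(∑ i, d i ^ 2)) n,
      f (p + (h / √n) • d) ∂μH[(K : ℝ)] ≤ ∫⁻ p in Pball (K + 1) D n, f p ∂μH[(K : ℝ)] := by
    intro h hh
    rw [← lintegral_indicator (isClosed_Pball _ _ _).measurableSet,
      ← lintegral_indicator (isClosed_Pball _ _ _).measurableSet,
      ← lintegral_add_right_eq_self ((Pball (K + 1) D n).indicator f) ((h / √n) • d)]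
    refine lintegral_mono fun p => ?_
    by_cases hp : p ∈ Pball (K + 1) (D - H * √(∑ i, d i ^ 2)) n
    · rw [Set.indicator_of_mem hp, Set.indicator_of_mem (Pball_shift hd hn (abs_le.2 hh) hp)]
    · rw [Set.indicator_of_notMem hp]; exact zero_le
  refine (setLIntegral_mono' measurableSet_Icc key).trans ?_
  rw [setLIntegral_const, Real.volume_Icc, mul_comm]
  gcongr
  linarith

/-! ### From the prior set to one dimension -/

/-- Reduction of the Bayes risk over the prior set to one-dimensional averages: if every
one-dimensional average is at least `c`, then so is, up to the volume ratio `ρ ^ K` of the two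
prior sets, the normalized Bayes risk. -/
lemma bayesRisk_ge {K L n : ℕ} {u c D H ρ : ℝ} (q : Fin L → Fin (K + 1) → ℝ) {i : Fin (K + 1)}
    {d : Fin (K + 1) → ℝ} (hdi : d i = 1) (hd : ∑ v, d v = 0) (hn0 : 0 < n)
    (hn : D / √n ≤ 1 / ((K + 1 : ℕ) : ℝ)) (hD : 0 < D) (hH : 0 < H) (hu : 0 ≤ u)
    (hρ0 : 0 < ρ) (hρ1 : ρ ≤ 1) (hρ : ρ * D = D - H * √(∑ v, d v ^ 2))
    (hone : ∀ p ∈ Pball (K + 1) (ρ * D) n, ∀ a : (Fin n → Fin L) → ℝ,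
      ENNReal.ofReal (2 * H * c) ≤ ∑ y : Fin n → Fin L, ∫⁻ h in Set.Icc (-H) H,
        (∏ l, ENNReal.ofReal (∑ v, p v * q (y l) v + h / √n * ∑ v, d v * q (y l) v)) *
          ENNReal.ofReal (|a y - h| ^ u)) :
    ENNReal.ofReal (ρ ^ K * c) ≤ (n : ℝ≥0∞) ^ (u / 2) * bayesRisk (K + 1) L u q D n i := by
  have hsn : 0 < √(n:ℝ) := Real.sqrt_pos.2 (by exact_mod_cast hn0)
  have hnu : (n : ℝ≥0∞) ^ (u / 2) = ENNReal.ofReal (√n ^ u) := by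
    rw [Real.sqrt_eq_rpow, ← Real.rpow_mul (Nat.cast_nonneg n), one_div_mul_eq_div,
      ← ENNReal.ofReal_rpow_of_nonneg (Nat.cast_nonneg n) (by positivity), ENNReal.ofReal_natCast]
  have hnu0 : (n : ℝ≥0∞) ^ (u / 2) ≠ 0 := by
    rw [hnu]; exact (ENNReal.ofReal_pos.2 (Real.rpow_pos_of_pos hsn u)).ne'
  have hnut : (n : ℝ≥0∞) ^ (u / 2) ≠ ∞ := by rw [hnu]; exact ENNReal.ofReal_ne_top
  rw [_root_.bayesRisk, ENNReal.mul_iInf_of_ne hnu0 hnut]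
  refine le_iInf fun est => ?_
  set f : (Fin (K + 1) → ℝ) → ℝ≥0∞ := fun p => ∑ y : Fin n → Fin L,
    (∏ j, ENNReal.ofReal (∑ v, p v * q (y j) v)) * ENNReal.ofReal (|est y - p i| ^ u) with hf
  have hfm : Measurable f := by
    refine Finset.measurable_fun_sum _ fun y _ => Measurable.mul ?_ ?_
    · exact Finset.measurable_fun_prod _ fun j _ => by fun_prop
    · have : Measurable fun p : Fin (K + 1) → ℝ => |est y - p i| := by fun_prop
      exact (this.pow_const u).ennreal_ofReal
  have hshift : ∀ (p : Fin (K + 1) → ℝ) (h : ℝ), (n : ℝ≥0∞) ^ (u / 2) * f (p + (h / √n) • d) =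
      ∑ y : Fin n → Fin L,
        (∏ l, ENNReal.ofReal (∑ v, p v * q (y l) v + h / √n * ∑ v, d v * q (y l) v)) *
          ENNReal.ofReal (|√n * (est y - p i) - h| ^ u) := by
    intro p h
    rw [hf, hnu, Finset.mul_sum]
    refine Finset.sum_congr rfl fun y _ => ?_
    rw [mul_left_comm, ← ENNReal.ofReal_mul (by positivity)]
    congr 1
    · refine Finset.prod_congr rfl fun l _ => ?_
      congr 1
      rw [Finset.mul_sum, ← Finset.sum_add_distrib]
      refine Finset.sum_congr rfl fun v _ => ?_
      simp only [Pi.add_apply, Pi.smul_apply, smul_eq_mul]; ring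
    · rw [← Real.mul_rpow hsn.le (abs_nonneg _)]
      nth_rewrite 1 [← abs_of_pos hsn]
      rw [← abs_mul]
      congr 3
      simp only [Pi.add_apply, Pi.smul_apply, smul_eq_mul, hdi]
      field_simp
      ring
  set A := (μH[(K : ℝ)]) (Pball (K + 1) D n) with hA
  have hA0 : A ≠ 0 := (hausdorff_Pball_pos K hD hn0).ne'
  have hAt : A ≠ ∞ := (hausdorff_Pball_lt_top K D n).ne
  have h1 : ENNReal.ofReal (2 * H * c) * (μH[(K : ℝ)]) (Pball (K + 1) (ρ * D) n) ≤
      ENNReal.ofReal (2 * H) *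
        ((n : ℝ≥0∞) ^ (u / 2) * ∫⁻ p in Pball (K + 1) D n, f p ∂μH[(K : ℝ)]) := by
    rw [mul_left_comm, ← setLIntegral_const]
    refine le_trans ?_ (mul_le_mul_right (lintegral_Pball_ge hd hn hfm) _)
    rw [← hρ, ← lintegral_const_mul' _ _ hnut]
    refine setLIntegral_mono' (isClosed_Pball _ _ _).measurableSet fun p hp => ?_
    rw [← lintegral_const_mul' _ _ hnut]
    simp_rw [hshift]
    rw [lintegral_finsetSum]
    · exact hone p hp fun y => √n * (est y - p i)
    · intro y _
      refine Measurable.mul ?_ ?_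
      · exact Finset.measurable_fun_prod _ fun j _ => by fun_prop
      · have : Measurable fun h : ℝ => |√n * (est y - p i) - h| := by fun_prop
        exact (this.pow_const u).ennreal_ofReal
  have h2H0 : ENNReal.ofReal (2 * H) ≠ 0 := (ENNReal.ofReal_pos.2 (by positivity)).ne'
  have h2 : ENNReal.ofReal (ρ ^ K * c) * A ≤
      (n : ℝ≥0∞) ^ (u / 2) * ∫⁻ p in Pball (K + 1) D n, f p ∂μH[(K : ℝ)] := by
    rw [← ENNReal.mul_le_mul_iff_right h2H0 ENNReal.ofReal_ne_top]
    refine le_trans ?_ h1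
    rw [ENNReal.ofReal_mul (p := 2 * H) (by positivity),
      ENNReal.ofReal_mul (p := ρ ^ K) (by positivity),
      mul_comm (ENNReal.ofReal (ρ ^ K)), mul_assoc, mul_assoc]
    gcongr
    exact hausdorff_Pball_scale K hρ0 hρ1 n
  have h3 : unifP (K + 1) D n = A⁻¹ • (μH[(K : ℝ)]).restrict (Pball (K + 1) D n) := by
    rw [unifP, hA]; simp
  rw [h3, lintegral_smul_measure, smul_eq_mul, mul_left_comm, ← ENNReal.div_eq_inv_mul,
    ENNReal.le_div_iff_mul_le (Or.inl hA0) (Or.inl hAt)]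
  exact h2

open Topology in
lemma tendsto_of_mem_Pball {k : ℕ} {D : ℝ} {p : ℕ → Fin k → ℝ} (hp : ∀ n, p n ∈ Pball k D n)
    (v : Fin k) : Tendsto (fun n => p n v) atTop (𝓝 (1 / (k : ℝ))) := by
  rw [tendsto_iff_dist_tendsto_zero]
  refine squeeze_zero (fun _ => dist_nonneg) (fun n => ?_)
    (tendsto_const_nhds (x := D).div_atTop
      (Real.tendsto_sqrt_atTop.comp tendsto_natCast_atTop_atTop))
  rw [Real.dist_eq]
  refine (Real.abs_le_sqrt ?_).trans (hp n).2
  exact Finset.single_le_sum (f := fun i => (p n i - 1 / (k : ℝ)) ^ 2)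
    (fun j _ => sq_nonneg _) (Finset.mem_univ v)

open Topology in
/-- A property of `(n, p)` that holds eventually along every sequence of points of the prior sets
holds eventually uniformly over the prior sets. -/
lemma eventually_forall_Pball {k : ℕ} (hk : 0 < k) {D : ℝ} (hD : 0 ≤ D)
    (S : ℕ → (Fin k → ℝ) → Prop)
    (h : ∀ p : ℕ → Fin k → ℝ, (∀ n, p n ∈ Pball k D n) → ∀ᶠ n in atTop, S n (p n)) :
    ∀ᶠ n in atTop, ∀ p ∈ Pball k D n, S n p := by
  have hU : ∀ n, (fun _ => 1 / (k : ℝ)) ∈ Pball k D n := fun n => by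
    have : (k : ℝ) ≠ 0 := by positivity
    refine ⟨⟨fun _ => by positivity, by simp [this]⟩, ?_⟩
    simp only [sub_self]
    simp; positivity
  have hsel : ∀ n, ∃ p ∈ Pball k D n, (∃ p' ∈ Pball k D n, ¬ S n p') → ¬ S n p := fun n => by
    by_cases hb : ∃ p' ∈ Pball k D n, ¬ S n p'
    · obtain ⟨p, hp, hS⟩ := hb
      exact ⟨p, hp, fun _ => hS⟩
    · exact ⟨_, hU n, fun h => absurd h hb⟩
  choose p hp hbad using hsel
  filter_upwards [h p hp] with n hn p' hp'
  by_contra hS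
  exact hbad n ⟨p', hp', hS⟩ hn

/-- Entries of a scheme in `D_{ε,E}` are positive: a zero entry would make the ratio `0 / m = 0`,
which is neither `1` nor `e ^ ε`. -/
lemma memDEE.pos {k L : ℕ} {ε : ℝ} {q : Fin L → Fin k → ℝ} (hq : memDEE k L ε q) (j : Fin L)
    (v : Fin k) : 0 < q j v := by
  refine (hq.1 j v).lt_of_ne fun h0 => ?_
  have := hq.2.2.2 j v
  rw [← h0, zero_div] at this
  rcases this with h | h
  · exact zero_ne_one h
  · exact (Real.exp_pos ε).ne h

theorem statement14 (k L : ℕ) (hk : 2 ≤ k) (ε u : ℝ) (hε : 0 < ε) (hu : 1 ≤ u)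
    (q : Fin L → Fin k → ℝ) (hq : memDEE k L ε q) (i : Fin k) :
    ∀ δ > (0:ℝ), ∃ D0 > (0:ℝ), ∀ D ≥ D0,
      ENNReal.ofReal (Cmom u *
          ((k:ℝ)^2 / ((k:ℝ)-1)^2 * ∑ j, (q j i - qrow q j)^2 / qrow q j) ^ (-(u/2)) - δ) ≤
        Filter.liminf (fun n : ℕ => (n : ℝ≥0∞) ^ (u/2) * bayesRisk k L u q D n i) atTop := by
  intro δ hδ
  set F := (k:ℝ)^2 / ((k:ℝ)-1)^2 * ∑ j, (q j i - qrow q j)^2 / qrow q j with hF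
  set V := Cmom u * F ^ (-(u/2)) with hV
  by_cases hVδ : V - δ ≤ 0
  · exact ⟨1, one_pos, fun D _ => by rw [ENNReal.ofReal_of_nonpos hVδ]; exact zero_le⟩
  rw [not_le] at hVδ
  have hk0 : (0:ℝ) < k := by positivity
  have hk1 : (0:ℝ) < (k:ℝ) - 1 := by
    have : (2:ℝ) ≤ k := by exact_mod_cast hk
    linarith
  have hqpos := hq.pos
  have hμ0 : ∀ j, 0 < qrow q j := fun j => by
    have : 0 < ∑ v, q j v := Finset.sum_pos (fun v _ => hqpos j v) ⟨i, Finset.mem_univ i⟩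
    rw [qrow]; positivity
  have hF0 : 0 < F := by
    have h0 : 0 ≤ F := mul_nonneg (by positivity) (Finset.sum_nonneg fun j _ =>
      div_nonneg (sq_nonneg _) (hμ0 j).le)
    refine h0.lt_of_ne fun h => ?_
    rw [hV, ← h, Real.zero_rpow (by linarith), mul_zero] at hVδ
    linarith
  -- the least favourable direction: the projection of `e_i` onto the hyperplane `∑ d = 0`,
  -- rescaled so that `d i = 1`
  set d : Fin k → ℝ := fun v => (k:ℝ) / (k - 1) * ((if v = i then 1 else 0) - 1 / (k:ℝ)) with hd
  have hdi : d i = 1 := by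
    simp only [hd, if_true]; field_simp
  have hdsum : ∑ v, d v = 0 := by
    simp only [hd, ← Finset.mul_sum, Finset.sum_sub_distrib]
    simp [hk0.ne']
  have hdq : ∀ j, ∑ v, d v * q j v = (k:ℝ) / (k - 1) * (q j i - qrow q j) := fun j => by
    simp only [hd, mul_assoc, ← Finset.mul_sum, sub_mul, Finset.sum_sub_distrib, qrow]
    simp
  have hvsum : ∑ j, ∑ v, d v * q j v = 0 := by
    rw [Finset.sum_comm]
    simp_rw [← Finset.mul_sum, hq.2.1, mul_one]
    exact hdsum
  have hFisher : F = ∑ j, (∑ v, d v * q j v) ^ 2 / qrow q j := by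
    simp_rw [hdq, mul_pow, mul_div_assoc, ← Finset.mul_sum, div_pow]
    exact hF
  obtain ⟨c, hc1, hc2⟩ := exists_between (sub_lt_self V hδ)
  have hc0 : 0 < c := hVδ.trans hc1
  obtain ⟨H, hH, hone⟩ := exists_oneDim hu (qrow q) _ hμ0 hvsum hFisher hF0 hc2
  obtain ⟨K, rfl⟩ : ∃ K, k = K + 1 := ⟨k - 1, by omega⟩
  set N := √(∑ v, d v ^ 2) with hN
  have hlim : Tendsto (fun D : ℝ => (1 - H * N / D) ^ K * c) atTop (nhds ((1 - 0) ^ K * c)) :=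
    (((tendsto_const_nhds.div_atTop tendsto_id).const_sub 1).pow K).mul_const c
  rw [sub_zero, one_pow, one_mul] at hlim
  obtain ⟨D1, hD1⟩ := eventually_atTop.1 ((hlim.eventually (lt_mem_nhds hc1)).and
    (eventually_gt_atTop (max 0 (H * N))))
  refine ⟨max D1 1, by positivity, fun D hDge => ?_⟩
  obtain ⟨hDc, hDmax⟩ := hD1 D ((le_max_left _ _).trans hDge)
  have hD0 : 0 < D := (le_max_left _ _).trans_lt hDmax
  have hDN : H * N < D := (le_max_right _ _).trans_lt hDmax
  have hHN : 0 ≤ H * N := by positivity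
  have hρ : (1 - H * N / D) * D = D - H * N := by field_simp
  have hρ0 : 0 < 1 - H * N / D := by rw [sub_pos, div_lt_one hD0]; exact hDN
  have hρ1 : 1 - H * N / D ≤ 1 := by linarith [div_nonneg hHN hD0.le]
  have hev := eventually_forall_Pball (k := K + 1) (Nat.succ_pos K) (D := (1 - H * N / D) * D)
    (by positivity) (fun n p => ∀ a : (Fin n → Fin L) → ℝ,
      ENNReal.ofReal (2 * H * c) ≤ ∑ y : Fin n → Fin L, ∫⁻ h in Set.Icc (-H) H,
        (∏ l, ENNReal.ofReal (∑ v, p v * q (y l) v + h / √n * ∑ v, d v * q (y l) v)) *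
          ENNReal.ofReal (|a y - h| ^ u)) fun p hp => by
      refine hone (fun n j => ∑ v, p n v * q j v) (fun n j => ?_) (fun n => ?_) fun j => ?_
      · obtain ⟨⟨h0, h1⟩, -⟩ := hp n
        obtain ⟨v, -, hv⟩ := Finset.exists_ne_zero_of_sum_ne_zero (h1.trans_ne one_ne_zero)
        exact Finset.sum_pos' (fun v _ => mul_nonneg (h0 v) (hqpos j v).le)
          ⟨v, Finset.mem_univ v, mul_pos ((h0 v).lt_of_ne' hv) (hqpos j v)⟩
      · rw [Finset.sum_comm]
        simp_rw [← Finset.mul_sum, hq.2.1, mul_one]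
        exact (hp n).1.2
      · rw [qrow, Finset.mul_sum]
        exact tendsto_finsetSum _ fun v _ => (tendsto_of_mem_Pball hp v).mul_const _
  have hsmall : ∀ᶠ n : ℕ in atTop, D / √n ≤ 1 / ((K + 1 : ℕ) : ℝ) :=
    (tendsto_const_nhds.div_atTop (Real.tendsto_sqrt_atTop.comp
      tendsto_natCast_atTop_atTop)).eventually (ge_mem_nhds (by positivity))
  refine le_liminf_of_le (by isBoundedDefault) ?_
  filter_upwards [hev, hsmall, eventually_gt_atTop 0] with n hn1 hn2 hn0
  exact (ENNReal.ofReal_le_ofReal hDc.le).trans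
    (bayesRisk_ge q hdi hdsum hn0 hn2 hD0 hH (by linarith) hρ0 hρ1 hρ hn1)
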